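/- arXiv:2506.10727 — 6 statements merged into one kernel-verified Lean document; each statement's English description precedes it below -/
import Mathlib

section
/- Let G be a finite group with subgroups H ≤ K ≤ G and J ≤ G, where J acts on the coset spaces G/H and G/K by left multiplication. Then |(G/H)^J| = Σ_{xK ∈ (G/K)^J} |(K/H)^{x⁻¹Jx}|, where the sum runs over the J-fixed cosets xK of G/K, x is any chosen representative of such a coset (note that x⁻¹Jx ≤ K whenever xK is J-fixed, so x⁻¹Jx acts on K/H by left multiplication), and each summand is independent of the choice of representative x. Equivalently, there is a bijection (G/H)^J ≅ ⨆_{[x] ∈ (G/K)^J} (K/H)^{x⁻¹Jx}. -/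
/-!
A choice of representatives `x` for `G ⧸ K` identifies `G ⧸ H` with `G ⧸ K × K ⧸ H`, the pair
`(xK, kH)` corresponding to `xkH`. An element `j` fixes `xkH` iff `k⁻¹(x⁻¹jx)k ∈ H`. Since
`H ≤ K`, this forces `x⁻¹jx ∈ K`, i.e. `j` fixes `xK`, and then says that `x⁻¹jx` fixes `kH`.
-/

theorem card_sigma_eq_finsum {ι : Type*} {β : ι → Type*} [Finite (Σ i, β i)] :
    Nat.card (Σ i, β i) = ∑ᶠ i, Nat.card (β i) := by
  let fiberCard : ι → ℕ := fun i ↦ Nat.card (β i)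
  have finite_fiber (i : ι) : Finite (β i) := Finite.of_injective (Sigma.mk i) sigma_mk_injective
  have mem_support_iff (i : ι) : i ∈ fiberCard.support ↔ Nonempty (β i) :=
    Nat.card_ne_zero.trans (and_iff_left (finite_fiber i))
  have finite_support : fiberCard.support.Finite :=
    (Set.finite_range (Sigma.fst : (Σ i, β i) → ι)).subset fun i hi ↦
      have ⟨b⟩ := (mem_support_iff i).mp hi
      ⟨⟨i, b⟩, rfl⟩
  have := finite_support.fintype
  calc Nat.card (Σ i, β i)
      = Nat.card (Σ i : fiberCard.support, β i) :=
        Nat.card_congr <|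
          (Equiv.sigmaSubtypeEquivOfSubset β _ fun i b ↦ (mem_support_iff i).mpr ⟨b⟩).symm
    _ = ∑ᶠ i : fiberCard.support, fiberCard i := by rw [Nat.card_sigma, finsum_eq_sum_of_fintype]
    _ = ∑ᶠ i ∈ fiberCard.support, fiberCard i := finsum_set_coe_eq_finsum_mem _
    _ = ∑ᶠ i, fiberCard i := finsum_mem_support fiberCard

section

variable {G : Type*} [Group G] {H K : Subgroup G}

theorem smul_mk_eq_self_iff (g x : G) :
    g • (x : G ⧸ H) = x ↔ x⁻¹ * g * x ∈ H := by
  rw [MulAction.Quotient.smul_coe, eq_comm, QuotientGroup.eq, smul_eq_mul, mul_assoc]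

theorem smul_mk_mul_eq_self_iff (hHK : H ≤ K) (g x : G) (k : K) :
    g • ((x * k : G) : G ⧸ H) = (x * k : G) ↔
      g • (x : G ⧸ K) = x ∧ ∀ h : x⁻¹ * g * x ∈ K,
        (⟨x⁻¹ * g * x, h⟩ : K) • (k : K ⧸ H.subgroupOf K) = k := by
  have conj_mul : (x * k)⁻¹ * g * (x * k) = (k : G)⁻¹ * (x⁻¹ * g * x) * k := by group
  simp only [smul_mk_eq_self_iff, Subgroup.mem_subgroupOf, Subgroup.coe_mul, Subgroup.coe_inv,
    conj_mul]
  refine ⟨fun hH ↦ ⟨?_, fun _ ↦ hH⟩, fun ⟨hK, hH⟩ ↦ hH hK⟩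
  simpa only [K.mul_mem_cancel_right k.2, K.mul_mem_cancel_left (K.inv_mem k.2)] using hHK hH

theorem smul_quotientEquivProdOfLE'_symm_eq_self_iff (hHK : H ≤ K) {rep : G ⧸ K → G}
    (hrep : Function.RightInverse rep QuotientGroup.mk) (g : G) (p : (G ⧸ K) × K ⧸ H.subgroupOf K) :
    g • (Subgroup.quotientEquivProdOfLE' hHK rep hrep).symm p =
        (Subgroup.quotientEquivProdOfLE' hHK rep hrep).symm p ↔
      g • p.1 = p.1 ∧ ∀ h : (rep p.1)⁻¹ * g * rep p.1 ∈ K,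
        (⟨(rep p.1)⁻¹ * g * rep p.1, h⟩ : K) • p.2 = p.2 := by
  obtain ⟨w, y⟩ := p
  induction y using QuotientGroup.induction_on with | H k =>
  simpa only [hrep w] using! smul_mk_mul_eq_self_iff hHK g (rep w) k

/-- The bijection `(G ⧸ H)^S ≃ ⨆ w ∈ (G ⧸ K)^S, (K ⧸ H)^(x⁻¹Sx)`, where `x = rep w` is the chosen
representative of `w`. Fixed points are taken under a mere subset `S` of `G`, and the condition on
`y` ranges over those `x⁻¹ * j * x` that lie in `K`, which for fixed `w` is all of them. -/
def fixedPointsEquivSigma (hHK : H ≤ K) (S : Set G) (rep : G ⧸ K → G)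
    (hrep : Function.RightInverse rep QuotientGroup.mk) :
    {z : G ⧸ H // ∀ j ∈ S, j • z = z} ≃
      Σ w : {w : G ⧸ K // ∀ j ∈ S, j • w = w},
        {y : K ⧸ H.subgroupOf K // ∀ j ∈ S, ∀ h : (rep w)⁻¹ * j * rep w ∈ K,
          (⟨(rep w)⁻¹ * j * rep w, h⟩ : K) • y = y} :=
  calc {z : G ⧸ H // ∀ j ∈ S, j • z = z}
    _ ≃ {p : (G ⧸ K) × K ⧸ H.subgroupOf K // (∀ j ∈ S, j • p.1 = p.1) ∧
          ∀ j ∈ S, ∀ h : (rep p.1)⁻¹ * j * rep p.1 ∈ K,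
            (⟨(rep p.1)⁻¹ * j * rep p.1, h⟩ : K) • p.2 = p.2} :=
        ((Subgroup.quotientEquivProdOfLE' hHK rep hrep).symm.subtypeEquiv fun p ↦ by
          simp only [smul_quotientEquivProdOfLE'_symm_eq_self_iff, ← forall₂_and]).symm
    _ ≃ _ :=
        { toFun := fun p ↦ ⟨⟨p.1.1, p.2.1⟩, p.1.2, p.2.2⟩
          invFun := fun q ↦ ⟨(q.1.1, q.2.1), q.1.2, q.2.2⟩ }

end

theorem stmt0_general {G : Type*} [Group G] (H K : Subgroup G) (S : Set G) (hHK : H ≤ K)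
    (rep : G ⧸ K → G) (hrep : Function.RightInverse rep QuotientGroup.mk) :
    (Finite {z : G ⧸ H // ∀ j ∈ S, j • z = z} →
      Nat.card {z : G ⧸ H // ∀ j ∈ S, j • z = z}
        = ∑ᶠ w : {w : G ⧸ K // ∀ j ∈ S, j • w = w},
            Nat.card {y : K ⧸ H.subgroupOf K // ∀ j ∈ S, ∀ h : (rep w)⁻¹ * j * rep w ∈ K,
              (⟨(rep w)⁻¹ * j * rep w, h⟩ : K) • y = y})
    ∧ Nonempty ({z : G ⧸ H // ∀ j ∈ S, j • z = z} ≃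
        Σ w : {w : G ⧸ K // ∀ j ∈ S, j • w = w},
          {y : K ⧸ H.subgroupOf K // ∀ j ∈ S, ∀ h : (rep w)⁻¹ * j * rep w ∈ K,
            (⟨(rep w)⁻¹ * j * rep w, h⟩ : K) • y = y}) := by
  let e := fixedPointsEquivSigma hHK S rep hrep
  refine ⟨fun _ ↦ ?_, ⟨e⟩⟩
  have := Finite.of_equiv _ e
  rw [Nat.card_congr e, card_sigma_eq_finsum]

/-- For subgroups `H ≤ K ≤ G` and `J ≤ G`, there is a bijection
`(G/H)^J ≅ ⨆_{[x] ∈ (G/K)^J} (K/H)^{x⁻¹Jx}`, and correspondingly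
`|(G/H)^J| = Σ_{xK ∈ (G/K)^J} |(K/H)^{x⁻¹Jx}|`. -/
theorem stmt0 {G : Type*} [Group G] [Finite G] (H K J : Subgroup G) (hHK : H ≤ K) :
    (Nat.card {z : G ⧸ H // ∀ j ∈ J, j • z = z}
      = ∑ᶠ w : {w : G ⧸ K // ∀ j ∈ J, j • w = w},
          Nat.card {y : ↥K ⧸ H.subgroupOf K //
            ∀ j ∈ J, ∀ h : w.1.out⁻¹ * j * w.1.out ∈ K,
              (⟨w.1.out⁻¹ * j * w.1.out, h⟩ : K) • y = y})
    ∧ Nonempty ({z : G ⧸ H // ∀ j ∈ J, j • z = z} ≃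
        Σ w : {w : G ⧸ K // ∀ j ∈ J, j • w = w},
          {y : ↥K ⧸ H.subgroupOf K //
            ∀ j ∈ J, ∀ h : w.1.out⁻¹ * j * w.1.out ∈ K,
              (⟨w.1.out⁻¹ * j * w.1.out, h⟩ : K) • y = y}) := by
  have h := stmt0_general H K J hHK Quotient.out QuotientGroup.out_eq'
  exact ⟨h.1 inferInstance, h.2⟩
end

section
/- Let G be a finite group, let H, L ≤ K be subgroups of G, and let J ≤ L be a subgroup. Then the map sending the double coset of ℓ in J\L/(L ∩ ᵞH) to the double coset of ℓγ in J\K/H induces a bijection ⨆_{[γ] ∈ L\K/H} J\L/(L ∩ ᵞH) ≅ J\K/H, where the disjoint union runs over the double cosets LγH in K with a chosen representative γ of each. -/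
/-!
For a homomorphism `f : L →* K`, the equation `f b * γ = f j * (f a * γ) * h` says exactly that
`a⁻¹ * j⁻¹ * b` lies in `f⁻¹(γHγ⁻¹)`, so `ℓ ↦ f ℓ * γ` embeds `J\L/f⁻¹(γHγ⁻¹)` into `f(J)\K/H`.
The image consists of the double cosets contained in `f(L)γH`, and these sets partition `K` as `γ`
runs over representatives of `f(L)\K/H`. The theorem is the case where `f` is the inclusion.
-/

theorem doubleCosetMk_eq_of_le {K : Type*} [Group K] {A B : Subgroup K} (H : Subgroup K)
    (hAB : A ≤ B) {x y : K} (hxy : DoubleCoset.mk A H x = DoubleCoset.mk A H y) :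
    DoubleCoset.mk B H x = DoubleCoset.mk B H y := by
  obtain ⟨a, ha, h, hh, rfl⟩ := (DoubleCoset.eq _ _ _ _).1 hxy
  exact (DoubleCoset.eq _ _ _ _).2 ⟨a, hAB ha, h, hh, rfl⟩

section Hom

variable {L K : Type*} [Group L] [Group K] (f : L →* K) (J : Subgroup L) (H : Subgroup K)

/-- The subgroup `f⁻¹(γHγ⁻¹)` of `L`, which is `L ∩ ᵞH` when `f` is the inclusion of a subgroup. -/
def comapConj (γ : K) : Subgroup L :=
  (H.map (MulAut.conj γ).toMonoidHom).comap f

variable {f H} in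
theorem mem_comapConj {γ : K} {ℓ : L} :
    ℓ ∈ comapConj f H γ ↔ ∃ h ∈ H, γ * h * γ⁻¹ = f ℓ :=
  Iff.rfl

theorem doubleCosetMk_comapConj_eq_iff (γ : K) (a b : L) :
    DoubleCoset.mk J (comapConj f H γ) a = DoubleCoset.mk J (comapConj f H γ) b ↔
      DoubleCoset.mk (J.map f) H (f a * γ) = DoubleCoset.mk (J.map f) H (f b * γ) := by
  rw [DoubleCoset.eq, DoubleCoset.eq]
  constructor
  · rintro ⟨j, hj, ℓ, hℓ, rfl⟩
    obtain ⟨h, hh, hγ⟩ := mem_comapConj.1 hℓ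
    refine ⟨f j, Subgroup.mem_map_of_mem f hj, h, hh, ?_⟩
    simp only [map_mul, ← hγ, mul_assoc, inv_mul_cancel, mul_one]
  · rintro ⟨_, ⟨j, hj, rfl⟩, h, hh, hb⟩
    refine ⟨j, hj, a⁻¹ * j⁻¹ * b, mem_comapConj.2 ⟨h, hh, ?_⟩, by group⟩
    simp only [map_mul, map_inv, eq_mul_inv_of_mul_eq hb]
    group

/-- The map `J\L/f⁻¹(γHγ⁻¹) → f(J)\K/H` sending the double coset of `ℓ` to that of `f ℓ * γ`. -/
def doubleCosetMulRight (γ : K) :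
    DoubleCoset.Quotient (J : Set L) (comapConj f H γ : Set L) →
      DoubleCoset.Quotient (J.map f : Set K) (H : Set K) :=
  Quotient.lift (fun ℓ ↦ DoubleCoset.mk (J.map f) H (f ℓ * γ)) fun a b hab ↦
    (doubleCosetMk_comapConj_eq_iff f J H γ a b).1 (Quotient.sound hab)

theorem doubleCosetMulRight_injective (γ : K) :
    Function.Injective (doubleCosetMulRight f J H γ) := by
  rintro ⟨a⟩ ⟨b⟩ hab
  exact (doubleCosetMk_comapConj_eq_iff f J H γ a b).2 hab

theorem doubleCosetMk_range_mul_left (ℓ : L) (x : K) :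
    DoubleCoset.mk f.range H (f ℓ * x) = DoubleCoset.mk f.range H x := by
  rw [eq_comm, DoubleCoset.eq]
  exact ⟨f ℓ, ⟨ℓ, rfl⟩, 1, H.one_mem, (mul_one _).symm⟩

theorem exists_doubleCosetMk_map_eq_of_range_eq {γ x : K}
    (hγx : DoubleCoset.mk f.range H γ = DoubleCoset.mk f.range H x) :
    ∃ ℓ : L, DoubleCoset.mk (J.map f) H (f ℓ * γ) = DoubleCoset.mk (J.map f) H x := by
  obtain ⟨_, ⟨ℓ, rfl⟩, h, hh, rfl⟩ := (DoubleCoset.eq _ _ _ _).1 hγx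
  exact ⟨ℓ, (DoubleCoset.eq _ _ _ _).2 ⟨1, one_mem _, h, hh, by rw [one_mul]⟩⟩

theorem sigma_doubleCosetMulRight_bijective
    (r : DoubleCoset.Quotient (f.range : Set K) (H : Set K) → K)
    (hr : ∀ d, DoubleCoset.mk f.range H (r d) = d) :
    Function.Bijective
      fun p : (Σ d, DoubleCoset.Quotient (J : Set L) (comapConj f H (r d) : Set L)) ↦
        doubleCosetMulRight f J H (r p.1) p.2 := by
  constructor
  · rintro ⟨d₁, ⟨a⟩⟩ ⟨d₂, ⟨b⟩⟩ hab
    obtain rfl : d₁ = d₂ := by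
      have hrange := doubleCosetMk_eq_of_le H (Subgroup.map_le_range f J) hab
      rwa [doubleCosetMk_range_mul_left, doubleCosetMk_range_mul_left, hr, hr] at hrange
    exact congrArg (Sigma.mk d₁) (doubleCosetMulRight_injective f J H (r d₁) hab)
  · rintro ⟨x⟩
    have hx := hr (DoubleCoset.mk f.range H x)
    obtain ⟨ℓ, hℓ⟩ := exists_doubleCosetMk_map_eq_of_range_eq f J H hx
    exact ⟨⟨_, DoubleCoset.mk J _ ℓ⟩, hℓ⟩

theorem exists_sigma_doubleCoset_equiv
    (r : DoubleCoset.Quotient (f.range : Set K) (H : Set K) → K)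
    (hr : ∀ d, DoubleCoset.mk f.range H (r d) = d) :
    ∃ e : (Σ d, DoubleCoset.Quotient (J : Set L) (comapConj f H (r d) : Set L)) ≃
        DoubleCoset.Quotient (J.map f : Set K) (H : Set K),
      ∀ d ℓ, e ⟨d, DoubleCoset.mk J (comapConj f H (r d)) ℓ⟩ =
        DoubleCoset.mk (J.map f) H (f ℓ * r d) :=
  ⟨Equiv.ofBijective _ (sigma_doubleCosetMulRight_bijective f J H r hr), fun _ _ ↦ rfl⟩

end Hom

section Inclusion

variable {G : Type*} [Group G] {K L J : Subgroup G}

theorem map_inclusion_subgroupOf (hL : L ≤ K) (hJ : J ≤ L) :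
    (J.subgroupOf L).map (Subgroup.inclusion hL) = J.subgroupOf K := by
  rw [← Subgroup.comap_inclusion_subgroupOf hL, Subgroup.map_comap_eq_self]
  rw [Subgroup.inclusion_range]
  exact Subgroup.comap_mono hJ

theorem comapConj_inclusion (H : Subgroup G) (hL : L ≤ K) :
    comapConj (Subgroup.inclusion hL) (H.subgroupOf K) =
      fun γ : K ↦ (L ⊓ H.map (MulAut.conj (γ : G)).toMonoidHom).subgroupOf L := by
  ext γ ℓ
  rw [mem_comapConj, Subgroup.inf_subgroupOf_left]
  constructor
  · rintro ⟨h, hh, hγ⟩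
    exact ⟨h, hh, congrArg Subtype.val hγ⟩
  · rintro ⟨h, hh, hγ : γ * h * (γ : G)⁻¹ = ℓ⟩
    have hK : h ∈ K := by
      rw [← Subgroup.mul_mem_cancel_left K γ.2, ← Subgroup.mul_mem_cancel_right K (inv_mem γ.2), hγ]
      exact hL ℓ.2
    exact ⟨⟨h, hK⟩, hh, Subtype.ext hγ⟩

theorem stmt2_general (H : Subgroup G) (hL : L ≤ K) (hJ : J ≤ L)
    (r : DoubleCoset.Quotient (L.subgroupOf K : Set K) (H.subgroupOf K : Set K) → K)
    (hr : ∀ d, DoubleCoset.mk (L.subgroupOf K) (H.subgroupOf K) (r d) = d) :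
    ∃ e : (Σ d, DoubleCoset.Quotient (J.subgroupOf L : Set L)
            ((L ⊓ H.map (MulAut.conj (r d : G)).toMonoidHom).subgroupOf L : Set L)) ≃
          DoubleCoset.Quotient (J.subgroupOf K : Set K) (H.subgroupOf K : Set K),
      ∀ d ℓ,
        e ⟨d, DoubleCoset.mk (J.subgroupOf L)
              ((L ⊓ H.map (MulAut.conj (r d : G)).toMonoidHom).subgroupOf L) ℓ⟩ =
          DoubleCoset.mk (J.subgroupOf K) (H.subgroupOf K) (Subgroup.inclusion hL ℓ * r d) := by
  have hequiv := exists_sigma_doubleCoset_equiv (Subgroup.inclusion hL) (J.subgroupOf L)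
    (H.subgroupOf K)
  rw [Subgroup.inclusion_range, map_inclusion_subgroupOf hL hJ, comapConj_inclusion] at hequiv
  exact hequiv r hr

end Inclusion

/-- For subgroups `H, L ≤ K` of a finite group `G` and `J ≤ L`, the map
`[ℓ] ↦ [ℓγ]` induces a bijection `⨆_{[γ] ∈ L\K/H} J\L/(L ∩ ᵞH) ≅ J\K/H`. -/
theorem stmt2 {G : Type*} [Group G] [Finite G] (K H L J : Subgroup G)
    (hH : H ≤ K) (hL : L ≤ K) (hJ : J ≤ L) :
    ∃ e : (Σ d : DoubleCoset.Quotient (↑(L.subgroupOf K) : Set K) (↑(H.subgroupOf K) : Set K),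
            DoubleCoset.Quotient (↑(J.subgroupOf L) : Set L)
              (↑((L ⊓ H.map (MulAut.conj ((d.out : K) : G)).toMonoidHom).subgroupOf L) : Set L)) ≃
          DoubleCoset.Quotient (↑(J.subgroupOf K) : Set K) (↑(H.subgroupOf K) : Set K),
      ∀ (d : DoubleCoset.Quotient (↑(L.subgroupOf K) : Set K) (↑(H.subgroupOf K) : Set K)) (ℓ : L),
        e ⟨d, DoubleCoset.mk (J.subgroupOf L)
              ((L ⊓ H.map (MulAut.conj ((d.out : K) : G)).toMonoidHom).subgroupOf L) ℓ⟩
          = DoubleCoset.mk (J.subgroupOf K) (H.subgroupOf K)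
              ⟨(ℓ : G) * ((d.out : K) : G), mul_mem (hL ℓ.2) (d.out : K).2⟩ :=
  stmt2_general H hL hJ Quotient.out (DoubleCoset.out_eq' _ _)
end

section
/- (Functoriality of transfer in the ghost.) Let G be a finite group with subgroups H ≤ L ≤ K ≤ G, and let a : Subgroup G → ℤ be a function satisfying a(h⁻¹Ih) = a(I) for every subgroup I ≤ H and every h ∈ H. Then for every subgroup J ≤ K: Σ_{kL ∈ K/L, k⁻¹Jk ≤ L} ( Σ_{ℓH ∈ L/H, (kℓ)⁻¹J(kℓ) ≤ H} a((kℓ)⁻¹J(kℓ)) ) = Σ_{mH ∈ K/H, m⁻¹Jm ≤ H} a(m⁻¹Jm). Here all sums are over the indicated coset spaces; the invariance hypothesis on a guarantees that each summand is independent of the chosen coset representatives. -/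
open scoped Classical

/-!
Extend `a` by zero from the subgroups of `H` to all subgroups of `G`. By invariance of `a`, the
extended value at `J ^ g` depends only on the coset `gH`. The transfer to `L` vanishes off the
subgroups of `L`, so the condition `J ^ k ≤ L` in the outer sum is automatic, and both sides sum
the same function along the bijection `K/H ≃ K/L × L/H`.
-/

section Conjugation

variable {G : Type*} [Group G]

/-- The conjugate `J ^ g = g⁻¹ J g`, a right action of `G` on its subgroups. -/
def rightConj (J : Subgroup G) (g : G) : Subgroup G :=
  J.map (MulAut.conj g⁻¹).toMonoidHom

theorem rightConj_mul (J : Subgroup G) (g h : G) :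
    rightConj J (g * h) = rightConj (rightConj J g) h := by
  simp only [rightConj, Subgroup.map_map, mul_inv_rev, map_mul]
  rfl

theorem rightConj_le_iff_of_mem {H : Subgroup G} {h : G} (hh : h ∈ H) (I : Subgroup G) :
    rightConj I h ≤ H ↔ I ≤ H := by
  have hH : rightConj H h = H := Subgroup.conj_smul_eq_self_of_mem (inv_mem hh)
  calc rightConj I h ≤ H ↔ rightConj I h ≤ rightConj H h := by rw [hH]
    _ ↔ I ≤ H := Subgroup.map_le_map_iff_of_injective (MulAut.conj h⁻¹).injective

end Conjugation

section CosetTower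

variable {G : Type*} [Group G] {H L K : Subgroup G}

/-- The bijection `K/H ≃ K/L × L/H` for `H ≤ L ≤ K`, whose inverse multiplies the representatives
chosen by `Quotient.out`. -/
noncomputable def quotientTowerEquiv (hHL : H ≤ L) (hLK : L ≤ K) :
    K ⧸ H.subgroupOf K ≃ (K ⧸ L.subgroupOf K) × (L ⧸ H.subgroupOf L) :=
  (Subgroup.quotientEquivProdOfLE (Subgroup.comap_mono hHL)).trans <|
    Equiv.prodCongr (Equiv.refl _) <|
      Quotient.congr (Subgroup.subgroupOfEquivOfLe hLK).toEquiv fun _ _ => by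
        simp only [QuotientGroup.leftRel_apply]
        rfl

theorem quotientTowerEquiv_symm_apply (hHL : H ≤ L) (hLK : L ≤ K)
    (x : K ⧸ L.subgroupOf K) (y : L ⧸ H.subgroupOf L) :
    (quotientTowerEquiv hHL hLK).symm (x, y) =
      QuotientGroup.mk (x.out * Subgroup.inclusion hLK y.out) := by
  nth_rw 1 [← QuotientGroup.out_eq' y]
  rfl

variable {M : Type*}

theorem apply_out_mk_of_mul_right_invariant {f : G → M}
    (hf : ∀ g, ∀ h ∈ H, f (g * h) = f g) (k : K) :
    f (QuotientGroup.mk k : K ⧸ H.subgroupOf K).out = f k := by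
  obtain ⟨h, hout⟩ := QuotientGroup.mk_out_eq_mul (H.subgroupOf K) k
  rw [hout]
  exact hf k h h.2

theorem finsum_finsum_quotient_tower [AddCommMonoid M] (hHL : H ≤ L) (hLK : L ≤ K) {f : G → M}
    (hf : ∀ g, ∀ h ∈ H, f (g * h) = f g)
    (hfin : (fun z : K ⧸ H.subgroupOf K => f z.out).HasFiniteSupport) :
    ∑ᶠ (x : K ⧸ L.subgroupOf K) (y : L ⧸ H.subgroupOf L), f (x.out * y.out) =
      ∑ᶠ z : K ⧸ H.subgroupOf K, f z.out := by
  let e := (quotientTowerEquiv hHL hLK).symm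
  have apply_out_symm (x : K ⧸ L.subgroupOf K) (y : L ⧸ H.subgroupOf L) :
      f (e (x, y)).out = f (x.out * y.out) := by
    rw [quotientTowerEquiv_symm_apply, apply_out_mk_of_mul_right_invariant hf]
    rfl
  calc ∑ᶠ (x : K ⧸ L.subgroupOf K) (y : L ⧸ H.subgroupOf L), f (x.out * y.out)
      = ∑ᶠ (x : K ⧸ L.subgroupOf K) (y : L ⧸ H.subgroupOf L), f (e (x, y)).out := by
        simp only [apply_out_symm]
    _ = ∑ᶠ p, f (e p).out :=
        (finsum_curry (fun p => f (e p).out) (hfin.preimage e.injective.injOn)).symm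
    _ = ∑ᶠ z : K ⧸ H.subgroupOf K, f z.out :=
        finsum_comp_equiv e (f := fun z : K ⧸ H.subgroupOf K => f z.out)

end CosetTower

section GhostTransfer

variable {G M : Type*} [Group G] {H L K : Subgroup G} {a : Subgroup G → M}

theorem indicator_rightConj_of_mem [Zero M]
    (ha : ∀ I ≤ H, ∀ h ∈ H, a (rightConj I h) = a I) {h : G} (hh : h ∈ H) (I : Subgroup G) :
    (Set.Iic H).indicator a (rightConj I h) = (Set.Iic H).indicator a I := by
  simp only [Set.indicator_apply, Set.mem_Iic, rightConj_le_iff_of_mem hh]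
  exact ite_congr rfl (fun hI => ha I hI h hh) fun _ => rfl

variable [AddCommMonoid M]

/-- The `J`-component of the ghost transfer `tr_H^K(a)`. Only the values of `a` on subgroups of `H`
matter; as a `finsum`, it is `0` when infinitely many cosets contribute. -/
noncomputable def ghostTransfer (H K : Subgroup G) (a : Subgroup G → M) (J : Subgroup G) : M :=
  ∑ᶠ z : K ⧸ H.subgroupOf K, (Set.Iic H).indicator a (rightConj J z.out)

theorem ghostTransfer_eq_zero_of_not_le (hHL : H ≤ L) {J : Subgroup G} (hJ : ¬J ≤ L) :
    ghostTransfer H L a J = 0 := by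
  refine finsum_eq_zero_of_forall_eq_zero fun y => Set.indicator_of_notMem (fun hy => hJ ?_) a
  exact (rightConj_le_iff_of_mem y.out.2 J).1 (hy.trans hHL)

theorem indicator_ghostTransfer (hHL : H ≤ L) :
    (Set.Iic L).indicator (ghostTransfer H L a) = ghostTransfer H L a :=
  Set.indicator_eq_self.2 fun _ hJ => not_imp_comm.1 (ghostTransfer_eq_zero_of_not_le hHL) hJ

theorem stmt4_general (hHL : H ≤ L) (hLK : L ≤ K)
    (ha : ∀ I ≤ H, ∀ h ∈ H, a (rightConj I h) = a I) (J : Subgroup G)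
    (hfin : (fun z : K ⧸ H.subgroupOf K =>
      (Set.Iic H).indicator a (rightConj J z.out)).HasFiniteSupport) :
    ghostTransfer L K (ghostTransfer H L a) J = ghostTransfer H K a J := by
  have summand_invariant (g h : G) (hh : h ∈ H) :
      (Set.Iic H).indicator a (rightConj J (g * h)) =
        (Set.Iic H).indicator a (rightConj J g) := by
    rw [rightConj_mul, indicator_rightConj_of_mem ha hh]
  calc ghostTransfer L K (ghostTransfer H L a) J
      = ∑ᶠ x : K ⧸ L.subgroupOf K, ghostTransfer H L a (rightConj J x.out) := by
        rw [ghostTransfer, indicator_ghostTransfer hHL]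
    _ = ∑ᶠ (x : K ⧸ L.subgroupOf K) (y : L ⧸ H.subgroupOf L),
          (Set.Iic H).indicator a (rightConj J (x.out * y.out)) := by
        simp only [ghostTransfer, rightConj_mul]
    _ = ghostTransfer H K a J :=
        finsum_finsum_quotient_tower hHL hLK
          (f := fun g => (Set.Iic H).indicator a (rightConj J g)) summand_invariant hfin

end GhostTransfer

/-- Functoriality of transfer in the ghost: for subgroups
`H ≤ L ≤ K ≤ G` and `a : Subgroup G → ℤ` invariant under `H`-conjugation on
subgroups of `H`, and any `J ≤ K`:
`Σ_{kL ∈ K/L, J^k ≤ L} (Σ_{ℓH ∈ L/H, J^{kℓ} ≤ H} a(J^{kℓ})) = Σ_{mH ∈ K/H, J^m ≤ H} a(J^m)`. -/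
theorem stmt4 {G : Type*} [Group G] [Finite G]
    (H L K : Subgroup G) (hHL : H ≤ L) (hLK : L ≤ K)
    (a : Subgroup G → ℤ)
    (ha : ∀ I : Subgroup G, I ≤ H → ∀ h ∈ H,
      a (I.map (MulAut.conj h⁻¹).toMonoidHom) = a I)
    (J : Subgroup G) (hJK : J ≤ K) :
    (∑ᶠ x : ↥K ⧸ L.subgroupOf K,
        if J.map (MulAut.conj ((x.out : K) : G)⁻¹).toMonoidHom ≤ L then
          (∑ᶠ y : ↥L ⧸ H.subgroupOf L,
            if J.map (MulAut.conj (((x.out : K) : G) * ((y.out : L) : G))⁻¹).toMonoidHom ≤ H then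
              a (J.map (MulAut.conj (((x.out : K) : G) * ((y.out : L) : G))⁻¹).toMonoidHom)
            else 0)
        else 0)
    = ∑ᶠ z : ↥K ⧸ H.subgroupOf K,
        if J.map (MulAut.conj ((z.out : K) : G)⁻¹).toMonoidHom ≤ H then
          a (J.map (MulAut.conj ((z.out : K) : G)⁻¹).toMonoidHom)
        else 0 := by
  have transfer_trans := stmt4_general hHL hLK ha J (Set.toFinite _)
  simp only [ghostTransfer, Set.indicator_apply, Set.mem_Iic, ← rightConj_mul] at transfer_trans
  exact transfer_trans
end

section
/- (Functoriality of norm in the ghost.) Let G be a finite group with subgroups H ≤ L ≤ K ≤ G, and let a : Subgroup G → ℤ be a function satisfying a(h⁻¹Ih) = a(I) for every subgroup I ≤ H and every h ∈ H. Then for every subgroup J ≤ K: ∏_{[g] ∈ J\K/H} a(g⁻¹Jg ∩ H) = ∏_{[m] ∈ J\K/L} ∏_{[g] ∈ (m⁻¹Jm ∩ L)\L/H} a((mg)⁻¹J(mg) ∩ H), where the products run over the indicated double coset spaces with arbitrarily chosen representatives (the products do not depend on these choices, by the invariance hypothesis on a). -/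
/-!
Projecting `J\K/H → J\K/L` partitions `J\K/H` into fibres, and left multiplication by `m`
identifies `(J^m ∩ L)\L/H` with the fibre over `[m]`: for `x y : L`, an equation
`m * y = j * (m * x) * h` says that `y = u * x * h` with `u = y * h⁻¹ * x⁻¹ = m⁻¹ * j * m`, which
lies in `J^m ∩ L`. The invariance of `a` makes `g ↦ a (J^g ∩ H)` constant on the double cosets
`J g H`, so the product over `J\K/H` can be grouped along these fibres.
-/

open Function

theorem finprod_fiberwise {α β M : Type*} [CommMonoid M] {f : α → M} (hf : HasFiniteMulSupport f)
    (p : α → β) : ∏ᶠ b, ∏ᶠ a ∈ p ⁻¹' {b}, f a = ∏ᶠ a, f a := by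
  classical
  calc ∏ᶠ b, ∏ᶠ a ∈ p ⁻¹' {b}, f a
      = ∏ᶠ b, ∏ a ∈ Set.Finite.toFinset hf with p a = b, f a :=
        finprod_congr fun b => finprod_mem_eq_prod_filter f (p ⁻¹' {b}) hf
    _ = ∏ a ∈ Set.Finite.toFinset hf, f a := finprod_prod_filter p _ f
    _ = ∏ᶠ a, f a := (finprod_eq_prod f hf).symm

section Conjugation

variable {G : Type*} [Group G] {J H : Subgroup G}

theorem mem_map_conj_inv {g x : G} :
    x ∈ J.map (MulAut.conj g⁻¹).toMonoidHom ↔ g * x * g⁻¹ ∈ J := by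
  rw [MulEquiv.toMonoidHom_eq_coe, Subgroup.map_equiv_eq_comap_symm, Subgroup.mem_comap]
  simp

theorem map_conj_inv_mul_mul_inf {j h : G} (hj : j ∈ J) (hh : h ∈ H) (x : G) :
    J.map (MulAut.conj (j * x * h)⁻¹).toMonoidHom ⊓ H =
      (J.map (MulAut.conj x⁻¹).toMonoidHom ⊓ H).map (MulAut.conj h⁻¹).toMonoidHom := by
  ext z
  have conj_mul : j * x * h * z * (j * x * h)⁻¹ = j * (x * (h * z * h⁻¹) * x⁻¹) * j⁻¹ := by group
  simp only [Subgroup.mem_inf, mem_map_conj_inv, conj_mul,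
    J.mul_mem_cancel_right (J.inv_mem hj), J.mul_mem_cancel_left hj,
    H.mul_mem_cancel_right (H.inv_mem hh), H.mul_mem_cancel_left hh]

theorem comap_inclusion_map_conj_inv_subgroupOf {L K : Subgroup G} (hLK : L ≤ K) (m : K) :
    ((J.subgroupOf K).map (MulAut.conj m⁻¹).toMonoidHom).comap (Subgroup.inclusion hLK) =
      (J.map (MulAut.conj (m : G)⁻¹).toMonoidHom ⊓ L).subgroupOf L := by
  ext x
  rw [Subgroup.inf_subgroupOf_right, Subgroup.mem_comap, Subgroup.mem_subgroupOf,
    mem_map_conj_inv, mem_map_conj_inv, Subgroup.mem_subgroupOf]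
  rfl

theorem map_inclusion_subgroupOf_s5 {L K : Subgroup G} (hHL : H ≤ L) (hLK : L ≤ K) :
    (H.subgroupOf L).map (Subgroup.inclusion hLK) = H.subgroupOf K := by
  rw [← Subgroup.inclusion_range hHL, MonoidHom.map_range,
    ← Subgroup.inclusion_range (hHL.trans hLK)]
  rfl

end Conjugation

section DoubleCosets

variable {K L : Type*} [Group K] [Group L] (φ : L →* K) (J : Subgroup K) (H : Subgroup L)

theorem doubleCoset_mk_mul_eq_iff (m : K) (x y : L) :
    DoubleCoset.mk J (H.map φ) (m * φ x) = DoubleCoset.mk J (H.map φ) (m * φ y) ↔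
      DoubleCoset.mk ((J.map (MulAut.conj m⁻¹).toMonoidHom).comap φ) H x =
        DoubleCoset.mk ((J.map (MulAut.conj m⁻¹).toMonoidHom).comap φ) H y := by
  simp only [DoubleCoset.eq, Subgroup.mem_comap, mem_map_conj_inv]
  constructor
  · rintro ⟨j, hj, _, ⟨h, hh, rfl⟩, hy⟩
    have conj_eq : m * φ (y * h⁻¹ * x⁻¹) * m⁻¹ = j := by
      rw [map_mul, map_mul, map_inv, map_inv, ← mul_assoc, ← mul_assoc, hy]
      group
    exact ⟨y * h⁻¹ * x⁻¹, conj_eq ▸ hj, h, hh, by group⟩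
  · rintro ⟨u, hu, h, hh, rfl⟩
    refine ⟨_, hu, φ h, Subgroup.mem_map_of_mem φ hh, ?_⟩
    rw [map_mul, map_mul]
    group

/-- The map `φ⁻¹(J^m)\L/H → J\K/φ(H)`, `[x] ↦ [m * φ x]`. When `φ` is the inclusion of a subgroup,
`φ⁻¹(J^m)` is `J^m ∩ L`. -/
def doubleCosetMulLeft (m : K) :
    DoubleCoset.Quotient ((J.map (MulAut.conj m⁻¹).toMonoidHom).comap φ : Set L) (H : Set L) →
      DoubleCoset.Quotient (J : Set K) (H.map φ : Set K) :=
  Quotient.lift (fun x => DoubleCoset.mk J (H.map φ) (m * φ x)) fun x y hxy =>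
    (doubleCoset_mk_mul_eq_iff φ J H m x y).2 (Quotient.sound hxy)

/-- The projection `J\K/φ(H) → J\K/φ(L)`, along whose fibres products over `J\K/φ(H)` are grouped. -/
def doubleCosetProj :
    DoubleCoset.Quotient (J : Set K) (H.map φ : Set K) →
      DoubleCoset.Quotient (J : Set K) (φ.range : Set K) :=
  Quotient.lift (DoubleCoset.mk J φ.range) fun x y hxy => by
    obtain ⟨j, hj, h, hh, rfl⟩ := DoubleCoset.rel_iff.1 hxy
    exact (DoubleCoset.eq _ _ _ _).2 ⟨j, hj, h, Subgroup.map_le_range φ H hh, rfl⟩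

theorem doubleCosetMulLeft_injective (m : K) : Injective (doubleCosetMulLeft φ J H m) := by
  rintro ⟨x⟩ ⟨y⟩ hxy
  exact (doubleCoset_mk_mul_eq_iff φ J H m x y).1 hxy

theorem range_doubleCosetMulLeft (m : K) :
    Set.range (doubleCosetMulLeft φ J H m) =
      doubleCosetProj φ J H ⁻¹' {DoubleCoset.mk J φ.range m} := by
  ext ⟨k⟩
  constructor
  · rintro ⟨⟨x⟩, hx⟩
    rw [← hx]
    exact (DoubleCoset.eq _ _ _ _).2 ⟨1, J.one_mem, φ x⁻¹, ⟨x⁻¹, rfl⟩, by simp⟩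
  · intro hk
    obtain ⟨j, hj, _, ⟨x, rfl⟩, rfl⟩ := (DoubleCoset.eq _ _ _ _).1 (Set.mem_singleton_iff.1 hk).symm
    refine ⟨DoubleCoset.mk _ H x, (DoubleCoset.eq _ _ _ _).2 ⟨j, hj, 1, Subgroup.one_mem _, ?_⟩⟩
    group

theorem finprod_doubleCoset_eq_finprod_finprod {M : Type*} [CommMonoid M]
    {f : DoubleCoset.Quotient (J : Set K) (H.map φ : Set K) → M} (hf : HasFiniteMulSupport f) :
    ∏ᶠ d, f d =
      ∏ᶠ m : DoubleCoset.Quotient (J : Set K) (φ.range : Set K),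
        ∏ᶠ e, f (doubleCosetMulLeft φ J H m.out e) := by
  rw [← finprod_fiberwise hf (doubleCosetProj φ J H)]
  refine finprod_congr fun m => ?_
  rw [← finprod_mem_range (doubleCosetMulLeft_injective φ J H m.out), range_doubleCosetMulLeft,
    DoubleCoset.out_eq']

theorem finprod_doubleCoset_out_eq_finprod_finprod {M : Type*} [CommMonoid M] {F : K → M}
    (hF : ∀ j ∈ J, ∀ h ∈ H, ∀ x, F (j * x * φ h) = F x)
    (hfin : HasFiniteMulSupport
      fun d : DoubleCoset.Quotient (J : Set K) (H.map φ : Set K) => F d.out) :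
    ∏ᶠ d : DoubleCoset.Quotient (J : Set K) (H.map φ : Set K), F d.out =
      ∏ᶠ m : DoubleCoset.Quotient (J : Set K) (φ.range : Set K),
        ∏ᶠ e : DoubleCoset.Quotient
            ((J.map (MulAut.conj m.out⁻¹).toMonoidHom).comap φ : Set L) (H : Set L),
          F (m.out * φ e.out) := by
  have out_mk : ∀ x, F (DoubleCoset.mk J (H.map φ) x).out = F x := fun x => by
    obtain ⟨j, _, hj, ⟨h, hh, rfl⟩, hx⟩ := DoubleCoset.mk_out_eq_mul J (H.map φ) x
    rw [hx, hF j hj h hh]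
  rw [finprod_doubleCoset_eq_finprod_finprod φ J H hfin]
  refine finprod_congr fun m => finprod_congr fun e => ?_
  conv_lhs => rw [← DoubleCoset.out_eq' _ _ e]
  exact out_mk _

end DoubleCosets

theorem stmt5_general {G M : Type*} [Group G] [CommMonoid M]
    (H L K : Subgroup G) (hHL : H ≤ L) (hLK : L ≤ K)
    (a : Subgroup G → M)
    (ha : ∀ I : Subgroup G, I ≤ H → ∀ h ∈ H,
      a (I.map (MulAut.conj h⁻¹).toMonoidHom) = a I)
    (J : Subgroup G)
    (hfin : HasFiniteMulSupport
      fun d : DoubleCoset.Quotient (↑(J.subgroupOf K) : Set K) (↑(H.subgroupOf K) : Set K) =>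
        a (J.map (MulAut.conj ((d.out : K) : G)⁻¹).toMonoidHom ⊓ H)) :
    (∏ᶠ d : DoubleCoset.Quotient (↑(J.subgroupOf K) : Set K) (↑(H.subgroupOf K) : Set K),
        a (J.map (MulAut.conj ((d.out : K) : G)⁻¹).toMonoidHom ⊓ H))
    = ∏ᶠ m : DoubleCoset.Quotient (↑(J.subgroupOf K) : Set K) (↑(L.subgroupOf K) : Set K),
        ∏ᶠ e : DoubleCoset.Quotient
            (↑((J.map (MulAut.conj ((m.out : K) : G)⁻¹).toMonoidHom ⊓ L).subgroupOf L) : Set L)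
            (↑(H.subgroupOf L) : Set L),
          a (J.map (MulAut.conj (((m.out : K) : G) * ((e.out : L) : G))⁻¹).toMonoidHom ⊓ H) := by
  let F : K → M := fun g => a (J.map (MulAut.conj (g : G)⁻¹).toMonoidHom ⊓ H)
  have hF : ∀ j ∈ J.subgroupOf K, ∀ h ∈ H.subgroupOf L, ∀ x,
      F (j * x * Subgroup.inclusion hLK h) = F x := fun j hj h hh x =>
    (congrArg a (map_conj_inv_mul_mul_inf (J := J) (H := H) hj hh x)).trans (ha _ inf_le_right h hh)
  have finprod_eq := finprod_doubleCoset_out_eq_finprod_finprod (Subgroup.inclusion hLK)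
    (J.subgroupOf K) (H.subgroupOf L) hF
  rw [map_inclusion_subgroupOf_s5 hHL hLK, Subgroup.inclusion_range hLK] at finprod_eq
  refine (finprod_eq hfin).trans (finprod_congr fun m => ?_)
  rw [comap_inclusion_map_conj_inv_subgroupOf hLK]
  rfl

/-- Functoriality of norm in the ghost: for subgroups
`H ≤ L ≤ K ≤ G` and `a : Subgroup G → ℤ` invariant under `H`-conjugation on
subgroups of `H`, and any `J ≤ K`:
`∏_{[g] ∈ J\K/H} a(J^g ∩ H) = ∏_{[m] ∈ J\K/L} ∏_{[g] ∈ (J^m ∩ L)\L/H} a(J^{mg} ∩ H)`. -/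
theorem stmt5 {G : Type*} [Group G] [Finite G]
    (H L K : Subgroup G) (hHL : H ≤ L) (hLK : L ≤ K)
    (a : Subgroup G → ℤ)
    (ha : ∀ I : Subgroup G, I ≤ H → ∀ h ∈ H,
      a (I.map (MulAut.conj h⁻¹).toMonoidHom) = a I)
    (J : Subgroup G) (hJK : J ≤ K) :
    (∏ᶠ d : DoubleCoset.Quotient (↑(J.subgroupOf K) : Set K) (↑(H.subgroupOf K) : Set K),
        a (J.map (MulAut.conj ((d.out : K) : G)⁻¹).toMonoidHom ⊓ H))
    = ∏ᶠ m : DoubleCoset.Quotient (↑(J.subgroupOf K) : Set K) (↑(L.subgroupOf K) : Set K),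
        ∏ᶠ e : DoubleCoset.Quotient
            (↑((J.map (MulAut.conj ((m.out : K) : G)⁻¹).toMonoidHom ⊓ L).subgroupOf L) : Set L)
            (↑(H.subgroupOf L) : Set L),
          a (J.map (MulAut.conj (((m.out : K) : G) * ((e.out : L) : G))⁻¹).toMonoidHom ⊓ H) := by
  have : Finite (DoubleCoset.Quotient (J.subgroupOf K : Set K) (H.subgroupOf K : Set K)) :=
    Quotient.finite _
  exact stmt5_general H L K hHL hLK a ha J (Set.toFinite _)
end

section
/- (Additive double coset formula in the ghost.) Let G be a finite group, let H, L ≤ K be subgroups of G, and let a : Subgroup G → ℤ be a function satisfying a(h⁻¹Ih) = a(I) for every subgroup I ≤ H and every h ∈ H. Then for every subgroup J ≤ L: Σ_{kH ∈ K/H, k⁻¹Jk ≤ H} a(k⁻¹Jk) = Σ_{[γ] ∈ L\K/H} Σ_{ℓ(L ∩ ᵞH) ∈ L/(L ∩ ᵞH), ℓ⁻¹Jℓ ≤ ᵞH} a((ℓγ)⁻¹J(ℓγ)), where the outer sum on the right runs over the double cosets LγH in K with arbitrarily chosen representatives γ (the sums do not depend on the choices of coset and double coset representatives, by the invariance hypothesis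 on a). -/
open scoped Classical

/-!
The group `G` acts on `G ⧸ H`, and the summand `a(J^k)` is a function of the coset `kH` alone.
By orbit-stabilizer the left-hand side sums this function over the `K`-orbit of the base coset
`H`, and the inner sum on the right, indexed by `L ⧸ (L ⊓ ᵞH)`, sums it over the `L`-orbit of `γH`.
The formula is the decomposition of the `K`-orbit into `L`-orbits, which are indexed by `L\K/H`.
-/

section OrbitDecomposition

open MulAction

variable {K X M : Type*} [Group K] [MulAction K X] [AddCommMonoid M]

theorem finsum_quotient_stabilizer (x : X) (f : X → M) :
    ∑ᶠ z : K ⧸ stabilizer K x, f (z.out • x) = ∑ᶠ y ∈ orbit K x, f y := by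
  have out_smul (z : K ⧸ stabilizer K x) : z.out • x = ofQuotientStabilizer K x z := by
    rw [← ofQuotientStabilizer_mk, QuotientGroup.out_eq']
  have range_eq : Set.range (ofQuotientStabilizer K x) = orbit K x := by
    rw [← QuotientGroup.mk_surjective.range_comp]
    rfl
  simp only [out_smul]
  rw [← range_eq, finsum_mem_range (injective_ofQuotientStabilizer K x)]

theorem doubleCosetMk_stabilizer_eq_iff (L : Subgroup K) (x : X) (k k' : K) :
    DoubleCoset.mk L (stabilizer K x) k = DoubleCoset.mk L (stabilizer K x) k' ↔
      k' • x ∈ orbit L (k • x) := by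
  rw [DoubleCoset.eq]
  constructor
  · rintro ⟨l, hl, s, hs, rfl⟩
    exact ⟨⟨l, hl⟩, by simp only [Subgroup.mk_smul, mul_smul, mem_stabilizer_iff.mp hs]⟩
  · rintro ⟨⟨l, hl⟩, h : l • k • x = k' • x⟩
    refine ⟨l, hl, (l * k)⁻¹ * k', ?_, (mul_inv_cancel_left _ _).symm⟩
    rw [mem_stabilizer_iff, mul_smul, ← h, ← mul_smul l, inv_smul_smul]

theorem iUnion_orbit_doubleCosetOut_smul (L : Subgroup K) (x : X) :
    ⋃ d : DoubleCoset.Quotient (L : Set K) (stabilizer K x), orbit L (d.out • x) = orbit K x := by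
  refine Set.Subset.antisymm (Set.iUnion_subset fun d => ?_) ?_
  · exact (orbit_subgroup_subset L _).trans (orbit_smul d.out x).subset
  · rintro _ ⟨k, rfl⟩
    exact Set.mem_iUnion.mpr ⟨DoubleCoset.mk L (stabilizer K x) k,
      (doubleCosetMk_stabilizer_eq_iff L x _ _).mp (DoubleCoset.out_eq' _ _ _)⟩

theorem eq_of_doubleCosetOut_smul_mem_orbit {L : Subgroup K} {x : X}
    {d d' : DoubleCoset.Quotient (L : Set K) (stabilizer K x)}
    (h : d'.out • x ∈ orbit L (d.out • x)) : d = d' := by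
  rw [← DoubleCoset.out_eq' _ _ d, ← DoubleCoset.out_eq' _ _ d']
  exact (doubleCosetMk_stabilizer_eq_iff L x _ _).mpr h

theorem pairwise_disjoint_orbit_doubleCosetOut_smul (L : Subgroup K) (x : X) :
    Pairwise (Function.onFun Disjoint
      fun d : DoubleCoset.Quotient (L : Set K) (stabilizer K x) => orbit L (d.out • x)) := by
  intro d d' hne
  refine (orbit.eq_or_disjoint _ _).resolve_left fun h => hne ?_
  exact eq_of_doubleCosetOut_smul_mem_orbit (h ▸ mem_orbit_self _)

theorem finite_doubleCosetQuotient_stabilizer (L : Subgroup K) {x : X} (hx : (orbit K x).Finite) :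
    Finite (DoubleCoset.Quotient (L : Set K) (stabilizer K x)) := by
  have := hx.to_subtype
  refine Finite.of_injective
    (fun d => (⟨d.out • x, mem_orbit x d.out⟩ : orbit K x)) fun d d' h => ?_
  have out_smul_eq : d.out • x = d'.out • x := congrArg Subtype.val h
  exact eq_of_doubleCosetOut_smul_mem_orbit (out_smul_eq ▸ mem_orbit_self _)

theorem finsum_mem_orbit_eq_finsum_doubleCoset (L : Subgroup K) {x : X}
    (hx : (orbit K x).Finite) (f : X → M) :
    ∑ᶠ y ∈ orbit K x, f y =
      ∑ᶠ d : DoubleCoset.Quotient (L : Set K) (stabilizer K x),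
        ∑ᶠ y ∈ orbit L (d.out • x), f y := by
  have := finite_doubleCosetQuotient_stabilizer L hx
  rw [← iUnion_orbit_doubleCosetOut_smul L x]
  refine finsum_mem_iUnion (pairwise_disjoint_orbit_doubleCosetOut_smul L x) fun d => ?_
  exact hx.subset ((orbit_subgroup_subset L _).trans (orbit_smul d.out x).subset)

end OrbitDecomposition

section CosetAction

open MulAction

variable {G M : Type*} [Group G] [AddCommMonoid M]

theorem orbit_subgroupOf_eq_of_le {X : Type*} [MulAction G X] {K L : Subgroup G} (hL : L ≤ K)
    (x : X) : orbit (L.subgroupOf K) x = orbit L x := by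
  ext y
  rw [← orbitRel_apply, orbitRel_subgroupOf, inf_eq_left.mpr hL, orbitRel_apply]

theorem stabilizer_subgroup_coset (L H : Subgroup G) (g : G) :
    stabilizer L (g : G ⧸ H) =
      (L ⊓ H.map (MulAut.conj g).toMonoidHom).subgroupOf L := by
  have stabilizer_coset : stabilizer G (g : G ⧸ H) = H.map (MulAut.conj g).toMonoidHom := by
    conv_rhs => rw [← stabilizer_quotient H]
    rw [← stabilizer_smul_eq_stabilizer_map_conj, Quotient.smul_coe, smul_eq_mul, mul_one]
  rw [Subgroup.inf_subgroupOf_left, ← stabilizer_coset]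
  rfl

theorem stabilizer_subgroup_baseCoset (K H : Subgroup G) :
    stabilizer K ((1 : G) : G ⧸ H) = H.subgroupOf K := by
  conv_rhs => rw [← stabilizer_quotient H]
  rfl

theorem finite_orbit_baseCoset (K H : Subgroup G) [H.IsFiniteRelIndex K] :
    (orbit K ((1 : G) : G ⧸ H)).Finite := by
  have : Finite (K ⧸ stabilizer K ((1 : G) : G ⧸ H)) := by
    rw [stabilizer_subgroup_baseCoset]
    infer_instance
  exact Set.finite_coe_iff.mp (Finite.of_equiv _ (orbitEquivQuotientStabilizer K _).symm)

theorem finsum_coset_eq_finsum_doubleCoset {K L : Subgroup G} (H : Subgroup G) (hL : L ≤ K)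
    [H.IsFiniteRelIndex K] (f : G ⧸ H → M) :
    ∑ᶠ z : K ⧸ H.subgroupOf K, f ((z.out : K) : G) =
      ∑ᶠ d : DoubleCoset.Quotient (L.subgroupOf K : Set K) (H.subgroupOf K : Set K),
        ∑ᶠ y : L ⧸ (L ⊓ H.map (MulAut.conj ((d.out : K) : G)).toMonoidHom).subgroupOf L,
          f (((y.out : L) : G) * ((d.out : K) : G) : G) := by
  have smul_base (k : K) : k • ((1 : G) : G ⧸ H) = ((k : G) : G ⧸ H) :=
    congrArg _ (mul_one (k : G))
  have inner_sum (g : G) :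
      ∑ᶠ y : L ⧸ (L ⊓ H.map (MulAut.conj g).toMonoidHom).subgroupOf L, f ((y.out : G) * g : G) =
        ∑ᶠ x ∈ orbit L (g : G ⧸ H), f x := by
    rw [← stabilizer_subgroup_coset, ← finsum_quotient_stabilizer]
    rfl
  simp only [inner_sum, ← smul_base]
  rw [← stabilizer_subgroup_baseCoset K H, finsum_quotient_stabilizer,
    finsum_mem_orbit_eq_finsum_doubleCoset (L.subgroupOf K) (finite_orbit_baseCoset K H)]
  -- `rw` does not see the orbits here: the coset action of `K` on `G ⧸ H` agrees with the
  -- restriction to `K` of the action of `G` only after unfolding instances.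
  exact finsum_congr fun d =>
    congrArg (fun s : Set (G ⧸ H) => ∑ᶠ x ∈ s, f x) (orbit_subgroupOf_eq_of_le hL _)

end CosetAction

section GhostTransfer

variable {G M : Type*} [Group G] {H : Subgroup G} {a : Subgroup G → M}

theorem map_conj_mul_inv (J : Subgroup G) (g h : G) :
    J.map (MulAut.conj (g * h)⁻¹).toMonoidHom =
      (J.map (MulAut.conj g⁻¹).toMonoidHom).map (MulAut.conj h⁻¹).toMonoidHom := by
  rw [Subgroup.map_map, mul_inv_rev, map_mul]
  rfl

theorem map_conj_inv_le_iff (J H : Subgroup G) (g : G) :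
    J.map (MulAut.conj g⁻¹).toMonoidHom ≤ H ↔ J ≤ H.map (MulAut.conj g).toMonoidHom := by
  rw [Subgroup.map_le_iff_le_comap, Subgroup.map_equiv_eq_comap_symm', map_inv]
  rfl

theorem map_conj_eq_self_of_mem {h : G} (hh : h ∈ H) :
    H.map (MulAut.conj h).toMonoidHom = H :=
  Subgroup.mem_normalizer_iff_map_conj_eq.mp (Subgroup.le_normalizer hh)

/-- The values of `a` on subgroups of `H` are an element of the ghost of `H`: they are invariant
under conjugation by `H`. The values of `a` on other subgroups are unconstrained. -/
def IsGhostElement (H : Subgroup G) (a : Subgroup G → M) : Prop :=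
  ∀ I : Subgroup G, I ≤ H → ∀ h ∈ H, a (I.map (MulAut.conj h⁻¹).toMonoidHom) = a I

namespace IsGhostElement

variable [Zero M]

theorem ite_map_conj_mul_of_mem (ha : IsGhostElement H a) (J : Subgroup G) (g : G) {h : G}
    (hh : h ∈ H) :
    (if J.map (MulAut.conj (g * h)⁻¹).toMonoidHom ≤ H then
      a (J.map (MulAut.conj (g * h)⁻¹).toMonoidHom) else 0) =
    if J.map (MulAut.conj g⁻¹).toMonoidHom ≤ H then
      a (J.map (MulAut.conj g⁻¹).toMonoidHom) else 0 := by
  rw [map_conj_mul_inv, map_conj_inv_le_iff _ H h, map_conj_eq_self_of_mem hh]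
  split_ifs with hJ
  · exact ha _ hJ h hh
  · rfl

/-- The summand of the `J`-component of the transfer of `a` from `H`: it sends `gH` to `a (J^g)` if
`J^g ≤ H`, and to `0` otherwise. It is a function on cosets, so that no sum of its values depends
on a choice of representatives. -/
noncomputable def transferSummand (ha : IsGhostElement H a) (J : Subgroup G) : G ⧸ H → M :=
  Quotient.lift
    (fun g => if J.map (MulAut.conj g⁻¹).toMonoidHom ≤ H then
      a (J.map (MulAut.conj g⁻¹).toMonoidHom) else 0)
    fun g g' hgg' => by
      rw [← ha.ite_map_conj_mul_of_mem J g (QuotientGroup.leftRel_apply.mp hgg'),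
        mul_inv_cancel_left]

theorem transferSummand_mul (ha : IsGhostElement H a) (J : Subgroup G) (l g : G) :
    ha.transferSummand J (l * g : G) =
      if J.map (MulAut.conj l⁻¹).toMonoidHom ≤ H.map (MulAut.conj g).toMonoidHom then
        a (J.map (MulAut.conj (l * g)⁻¹).toMonoidHom) else 0 := by
  rw [← map_conj_inv_le_iff, ← map_conj_mul_inv]
  rfl

end IsGhostElement

end GhostTransfer

theorem stmt6_general {G M : Type*} [Group G] [AddCommMonoid M]
    (K H L : Subgroup G) [H.IsFiniteRelIndex K] (hL : L ≤ K)
    (a : Subgroup G → M)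
    (ha : ∀ I : Subgroup G, I ≤ H → ∀ h ∈ H,
      a (I.map (MulAut.conj h⁻¹).toMonoidHom) = a I)
    (J : Subgroup G) :
    (∑ᶠ z : ↥K ⧸ H.subgroupOf K,
        if J.map (MulAut.conj ((z.out : K) : G)⁻¹).toMonoidHom ≤ H then
          a (J.map (MulAut.conj ((z.out : K) : G)⁻¹).toMonoidHom)
        else 0)
    = ∑ᶠ d : DoubleCoset.Quotient (↑(L.subgroupOf K) : Set K) (↑(H.subgroupOf K) : Set K),
        ∑ᶠ y : ↥L ⧸ ((L ⊓ H.map (MulAut.conj ((d.out : K) : G)).toMonoidHom).subgroupOf L),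
          if J.map (MulAut.conj ((y.out : L) : G)⁻¹).toMonoidHom
              ≤ H.map (MulAut.conj ((d.out : K) : G)).toMonoidHom then
            a (J.map (MulAut.conj (((y.out : L) : G) * ((d.out : K) : G))⁻¹).toMonoidHom)
          else 0 := by
  simp only [← IsGhostElement.transferSummand_mul ha]
  exact finsum_coset_eq_finsum_doubleCoset H hL (IsGhostElement.transferSummand ha J)

/-- Additive double coset formula in the ghost: for subgroups
`H, L ≤ K` of `G`, `a : Subgroup G → ℤ` invariant under `H`-conjugation on
subgroups of `H`, and `J ≤ L`:
`Σ_{kH ∈ K/H, J^k ≤ H} a(J^k) = Σ_{[γ] ∈ L\K/H} Σ_{ℓ(L∩ᵞH) ∈ L/(L∩ᵞH), J^ℓ ≤ ᵞH} a(J^{ℓγ})`. -/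
theorem stmt6 {G : Type*} [Group G] [Finite G]
    (K H L : Subgroup G) (hH : H ≤ K) (hL : L ≤ K)
    (a : Subgroup G → ℤ)
    (ha : ∀ I : Subgroup G, I ≤ H → ∀ h ∈ H,
      a (I.map (MulAut.conj h⁻¹).toMonoidHom) = a I)
    (J : Subgroup G) (hJ : J ≤ L) :
    (∑ᶠ z : ↥K ⧸ H.subgroupOf K,
        if J.map (MulAut.conj ((z.out : K) : G)⁻¹).toMonoidHom ≤ H then
          a (J.map (MulAut.conj ((z.out : K) : G)⁻¹).toMonoidHom)
        else 0)
    = ∑ᶠ d : DoubleCoset.Quotient (↑(L.subgroupOf K) : Set K) (↑(H.subgroupOf K) : Set K),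
        ∑ᶠ y : ↥L ⧸ ((L ⊓ H.map (MulAut.conj ((d.out : K) : G)).toMonoidHom).subgroupOf L),
          if J.map (MulAut.conj ((y.out : L) : G)⁻¹).toMonoidHom
              ≤ H.map (MulAut.conj ((d.out : K) : G)).toMonoidHom then
            a (J.map (MulAut.conj (((y.out : L) : G) * ((d.out : K) : G))⁻¹).toMonoidHom)
          else 0 := by
  have : H.IsFiniteRelIndex K := Subgroup.isFiniteRelIndex_of_finiteIndex
  exact stmt6_general K H L hL a ha J
end

section
/- Let G be a finite group, p a prime, and H ≤ G a p-perfect subgroup, i.e. O^p(H) = H, where O^p(H) is the p-residual subgroup of the group H. Then there exist a positive integer n coprime to p and finite G-sets X and Y such that for every subgroup I ≤ G: |X^I| − |Y^I| = n if the image in G of O^p(I) is conjugate in G to H, and |X^I| − |Y^I| = 0 otherwise. (Here X^I denotes the set of I-fixed points of X.) -/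
open scoped Classical

/-- The `p`-residual subgroup `O^p(G)`: the intersection of all normal subgroups
`N ⊴ G` whose index `[G : N]` is a power of `p`. -/
def pResidual (p : ℕ) (G : Type*) [Group G] : Subgroup G :=
  ⨅ N ∈ {N : Subgroup G | N.Normal ∧ ∃ k : ℕ, N.index = p ^ k}, N

/-!
Write `I ≲ J` if `O^p(I)` is subconjugate to `O^p(J)`. For `J ≤ G`, let `P / O^p(J)` be a Sylow
`p`-subgroup of `N_G(O^p(J)) / O^p(J)`, so that `O^p(P) = O^p(J)`. The `G`-set `G / P` has
`I`-fixed points only if `I ≲ J`, and when `O^p(I)` is conjugate to `O^p(J)` their number is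
congruent modulo `p` to the number `[N_G(O^p(J)) : P]` of `O^p(J)`-fixed points, hence prime to `p`.
So in the Burnside ring, viewed as a ring of functions on subgroups, there is for each `J` a
function supported on `{I | I ≲ J}` with values prime to `p` on the equivalence class of `J`.
Multiplying it by elements `f k - f` for such functions `f` belonging to the classes below `J`
removes the rest of its support, and a function `f` supported on a finite set `S` yields the
constant `∏ j ∈ S, f j` on `S` as `∏ j ∈ S, f j - ∏ j ∈ S, (f j - f)`.
-/

open MulAction
open scoped Pointwise

lemma mem_normalizer_iff_conj_smul_eq {G : Type*} [Group G] {H : Subgroup G} {g : G} :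
    g ∈ Subgroup.normalizer (H : Set G) ↔ MulAut.conj g • H = H :=
  Subgroup.mem_normalizer_iff_map_conj_eq

section PResidual

variable {p : ℕ} {K L : Type*} [Group K] [Group L]

instance pResidual_normal : (pResidual p K).Normal :=
  Subgroup.normal_iInf_normal fun _ => Subgroup.normal_iInf_normal fun hN => hN.1

lemma pResidual_le_of_index_eq_pow {N : Subgroup K} [hN : N.Normal] {k : ℕ}
    (hk : N.index = p ^ k) : pResidual p K ≤ N :=
  iInf₂_le N ⟨hN, k, hk⟩

lemma map_pResidual_le [Fact p.Prime] (f : K →* L) :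
    (pResidual p K).map f ≤ pResidual p L := by
  refine le_iInf₂ fun N ⟨hN, k, hk⟩ => Subgroup.map_le_iff_le_comap.mpr ?_
  have hdvd : (N.comap f).index ∣ p ^ k := by
    rw [Subgroup.index_comap, ← hk]
    exact Subgroup.relIndex_dvd_index_of_normal N f.range
  obtain ⟨j, -, hj⟩ := (Nat.dvd_prime_pow Fact.out).mp hdvd
  exact pResidual_le_of_index_eq_pow hj

lemma exists_index_inf_eq_pow [Fact p.Prime] {M N : Subgroup K} [M.Normal] {j k : ℕ}
    (hM : M.index = p ^ j) (hN : N.index = p ^ k) : ∃ l, (M ⊓ N).index = p ^ l := by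
  obtain ⟨i, -, hi⟩ := (Nat.dvd_prime_pow Fact.out).mp
    (hM ▸ Subgroup.relIndex_dvd_index_of_normal M N)
  refine ⟨i + k, ?_⟩
  rw [← Subgroup.relIndex_mul_index inf_le_right, Subgroup.inf_relIndex_right, hi, hN, pow_add]

lemma exists_index_pResidual_eq_pow (p : ℕ) [Fact p.Prime] (K : Type*) [Group K] [Finite K] :
    ∃ k, (pResidual p K).index = p ^ k := by
  let S : Set (Subgroup K) := {N | N.Normal ∧ ∃ k, N.index = p ^ k}
  have hS : S.toFinite.toFinset.inf id = pResidual p K := by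
    rw [Finset.inf_id_eq_sInf, Set.Finite.coe_toFinset, sInf_eq_iInf]
    rfl
  suffices pResidual p K ∈ S from this.2
  rw [← hS]
  refine Finset.inf_induction ⟨inferInstance, 0, Subgroup.index_top⟩ ?_
    fun N hN => S.toFinite.mem_toFinset.mp hN
  rintro M ⟨_, _, hM⟩ N ⟨_, _, hN⟩
  exact ⟨inferInstance, exists_index_inf_eq_pow hM hN⟩

lemma isPGroup_quotient_pResidual [Fact p.Prime] [Finite K] :
    IsPGroup p (K ⧸ pResidual p K) :=
  have ⟨_, hk⟩ := exists_index_pResidual_eq_pow p K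
  .of_card hk

end PResidual

section PResidualImage

variable {p : ℕ} {G L : Type*} [Group G] [Group L] {I J : Subgroup G}

/-- The image in `G` of the `p`-residual subgroup `O^p(I)` of a subgroup `I ≤ G`. -/
def pResidualImage (p : ℕ) (I : Subgroup G) : Subgroup G :=
  (pResidual p I).map I.subtype

lemma pResidualImage_le : pResidualImage p I ≤ I :=
  Subgroup.map_subtype_le _

lemma pResidualImage_eq_self_iff : pResidualImage p I = I ↔ pResidual p I = ⊤ := by
  rw [pResidualImage, ← (Subgroup.map_injective I.subtype_injective).eq_iff,
    ← MonoidHom.range_eq_map, Subgroup.range_subtype]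

lemma map_pResidualImage_le [Fact p.Prime] {M : Subgroup L} (f : G →* L) (h : I ≤ M.comap f) :
    (pResidualImage p I).map f ≤ pResidualImage p M := by
  let fIM : I →* M := (f.comp I.subtype).codRestrict M fun x => h x.2
  calc (pResidualImage p I).map f = ((pResidual p I).map fIM).map M.subtype := by
        rw [pResidualImage, Subgroup.map_map, Subgroup.map_map]; rfl
    _ ≤ pResidualImage p M := Subgroup.map_mono (map_pResidual_le fIM)

lemma pResidualImage_mono [Fact p.Prime] (h : I ≤ J) :
    pResidualImage p I ≤ pResidualImage p J := by
  simpa only [Subgroup.map_id] using map_pResidualImage_le (MonoidHom.id G) h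

lemma conj_smul_pResidualImage_le [Fact p.Prime] (g : G) (I : Subgroup G) :
    MulAut.conj g • pResidualImage p I ≤ pResidualImage p (MulAut.conj g • I) :=
  map_pResidualImage_le (MulAut.conj g).toMonoidHom (Subgroup.le_comap_map _ I)

lemma pResidualImage_conj_smul [Fact p.Prime] (g : G) (I : Subgroup G) :
    pResidualImage p (MulAut.conj g • I) = MulAut.conj g • pResidualImage p I := by
  refine le_antisymm ?_ (conj_smul_pResidualImage_le g I)
  rw [← Subgroup.pointwise_smul_le_pointwise_smul_iff (a := MulAut.conj g⁻¹), smul_smul, ← map_mul]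
  simpa [smul_smul, ← map_mul] using conj_smul_pResidualImage_le g⁻¹ (MulAut.conj g • I)

lemma normalizer_le_normalizer_pResidualImage [Fact p.Prime] :
    Subgroup.normalizer (I : Set G) ≤ Subgroup.normalizer (pResidualImage p I : Set G) := by
  intro g hg
  rw [mem_normalizer_iff_conj_smul_eq, ← pResidualImage_conj_smul,
    mem_normalizer_iff_conj_smul_eq.mp hg]

lemma le_normalizer_pResidualImage [Fact p.Prime] :
    I ≤ Subgroup.normalizer (pResidualImage p I : Set G) :=
  Subgroup.le_normalizer.trans normalizer_le_normalizer_pResidualImage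

lemma subgroupOf_pResidualImage : (pResidualImage p I).subgroupOf I = pResidual p I :=
  Subgroup.comap_map_eq_self_of_injective I.subtype_injective _

lemma exists_relIndex_pResidualImage_eq_pow (p : ℕ) [Fact p.Prime] (I : Subgroup G) [Finite I] :
    ∃ k, (pResidualImage p I).relIndex I = p ^ k := by
  rw [Subgroup.relIndex, subgroupOf_pResidualImage]
  exact exists_index_pResidual_eq_pow p I

lemma pResidualImage_le_of_relIndex_eq_pow {k : ℕ} (hnorm : I ≤ Subgroup.normalizer (J : Set G))
    (hk : J.relIndex I = p ^ k) : pResidualImage p I ≤ J := by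
  have := Subgroup.normal_subgroupOf_of_le_normalizer hnorm
  have hle : pResidual p I ≤ J.subgroupOf I := pResidual_le_of_index_eq_pow hk
  exact Subgroup.map_le_iff_le_comap.mpr hle

lemma pResidualImage_pResidualImage [Fact p.Prime] [Finite I] :
    pResidualImage p (pResidualImage p I) = pResidualImage p I := by
  have : Finite (pResidualImage p I) := Finite.Set.subset (I : Set G) pResidualImage_le
  obtain ⟨j, hj⟩ := exists_relIndex_pResidualImage_eq_pow p I
  obtain ⟨k, hk⟩ := exists_relIndex_pResidualImage_eq_pow p (pResidualImage p I)
  have hnorm : I ≤ Subgroup.normalizer (pResidualImage p (pResidualImage p I) : Set G) :=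
    le_normalizer_pResidualImage.trans normalizer_le_normalizer_pResidualImage
  have hindex : (pResidualImage p (pResidualImage p I)).relIndex I = p ^ (k + j) := by
    rw [← Subgroup.relIndex_mul_relIndex _ _ _ pResidualImage_le pResidualImage_le, hk, hj, pow_add]
  exact le_antisymm pResidualImage_le (pResidualImage_le_of_relIndex_eq_pow hnorm hindex)

end PResidualImage

section Algebra

variable {ι R : Type*} [CommRing R] (B : Subalgebra R (ι → R))

lemma indicator_prod_mem {f : ι → R} (hf : f ∈ B) {S : Finset ι} (hS : ∀ i ∉ S, f i = 0) :
    (S : Set ι).indicator (fun _ => ∏ j ∈ S, f j) ∈ B := by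
  have hmem : algebraMap R (ι → R) (∏ j ∈ S, f j) -
      ∏ j ∈ S, (algebraMap R (ι → R) (f j) - f) ∈ B :=
    sub_mem (B.algebraMap_mem _) (prod_mem fun j _ => sub_mem (B.algebraMap_mem _) hf)
  convert hmem using 1
  funext i
  by_cases hi : i ∈ S
  · have hprod : ∏ j ∈ S, (f j - f i) = 0 := Finset.prod_eq_zero hi (sub_self (f i))
    simp [hi, hprod]
  · simp [hi, hS i hi]

variable [Finite ι] (M : Submonoid R) (r : ι → ι → Prop) [IsPreorder ι r] {f : ι → ι → R}

lemma exists_mem_eq_zero_of_not_antisymmRel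
    (hfB : ∀ j, f j ∈ B) (hfr : ∀ i j, f j i ≠ 0 → r i j)
    (hfM : ∀ i j, AntisymmRel r i j → f j i ∈ M) (j : ι) :
    ∃ f' ∈ B, (∀ i, ¬ AntisymmRel r i j → f' i = 0) ∧ ∀ i, AntisymmRel r i j → f' i ∈ M := by
  have := Fintype.ofFinite ι
  let T : Finset ι := {k | r k j ∧ ¬ r j k}
  refine ⟨f j * ∏ k ∈ T, (algebraMap R (ι → R) (f k k) - f k), mul_mem (hfB j)
    (prod_mem fun k _ => sub_mem (B.algebraMap_mem _) (hfB k)), fun i hi => ?_, fun i hi => ?_⟩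
  · rw [Pi.mul_apply, Finset.prod_apply]
    by_cases hij : r i j
    · have hiT : i ∈ T := by simpa [T, hij] using fun hji => hi ⟨hij, hji⟩
      rw [Finset.prod_eq_zero hiT (sub_self (f i i)), mul_zero]
    · rw [not_ne_iff.mp (mt (hfr i j) hij), zero_mul]
  · rw [Pi.mul_apply, Finset.prod_apply]
    refine mul_mem (hfM i j hi) (prod_mem fun k hk => ?_)
    have hik : f k i = 0 := not_ne_iff.mp fun h =>
      (Finset.mem_filter.mp hk).2.2 (_root_.trans hi.2 (hfr i k h))
    simpa [hik] using hfM k k (AntisymmRel.refl r k)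

theorem exists_indicator_antisymmRel_mem
    (hfB : ∀ j, f j ∈ B) (hfr : ∀ i j, f j i ≠ 0 → r i j)
    (hfM : ∀ i j, AntisymmRel r i j → f j i ∈ M) (j : ι) :
    ∃ n ∈ M, {i | AntisymmRel r i j}.indicator (fun _ => n) ∈ B := by
  have := Fintype.ofFinite ι
  obtain ⟨f', hf'B, hzero, hf'M⟩ := exists_mem_eq_zero_of_not_antisymmRel B M r hfB hfr hfM j
  let S : Finset ι := {i | AntisymmRel r i j}
  refine ⟨∏ i ∈ S, f' i, prod_mem fun i hi => hf'M i (Finset.mem_filter.mp hi).2, ?_⟩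
  simpa [S] using indicator_prod_mem B hf'B (S := S) (by simpa [S] using hzero)

end Algebra

section FixedPoints

variable {G X : Type*} [Group G] [MulAction G X]

lemma mem_fixedPoints_iff_le_stabilizer {I : Subgroup G} {x : X} :
    x ∈ fixedPoints I X ↔ I ≤ stabilizer G x := by
  simp [SetLike.le_def, Subgroup.smul_def]

lemma le_stabilizer_mk_iff_conj_smul_le {I P : Subgroup G} {g : G} :
    I ≤ stabilizer G (g : G ⧸ P) ↔ MulAut.conj g⁻¹ • I ≤ P := by
  have hstab : stabilizer G (g : G ⧸ P) = MulAut.conj g • P := by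
    rw [← mul_one g, ← smul_eq_mul, ← Quotient.smul_coe, stabilizer_smul_eq_stabilizer_map_conj,
      stabilizer_quotient, smul_eq_mul, mul_one]
    rfl
  rw [hstab, Subgroup.pointwise_smul_subset_iff, map_inv, inv_inv]

lemma card_fixedPoints_modEq_of_isPGroup_quotient {p : ℕ} [Fact p.Prime] [Finite X]
    {N : Subgroup G} [N.Normal] (hN : IsPGroup p (G ⧸ N)) :
    Nat.card (fixedPoints N X) ≡ Nat.card (fixedPoints G X) [MOD p] := by
  suffices fixedPoints (G ⧸ N) (fixedPoints N X) ≃ fixedPoints G X by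
    rw [← Nat.card_congr this]
    exact hN.card_modEq_card_fixedPoints _
  refine (Equiv.subtypeEquivRight fun x => ?_).trans
    (Equiv.subtypeSubtypeEquivSubtype (q := (· ∈ fixedPoints G X)) fun hx n => hx n)
  simp [QuotientGroup.mk_surjective.forall, Subtype.ext_iff]

end FixedPoints

section Mark

variable {G X Y : Type*} [Group G] [MulAction G X] [MulAction G Y]

/-- The mark of a subgroup `I` of `G` on the `G`-set `X`, that is, the number `|X^I|` of `I`-fixed
points, where a point `x` is `I`-fixed if and only if `I ≤ stabilizer G x`. -/
noncomputable def mark (X : Type*) [MulAction G X] (I : Subgroup G) : ℤ :=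
  Nat.card {x : X // I ≤ stabilizer G x}

lemma mark_eq_card_subtype (X : Type*) [MulAction G X] (I : Subgroup G) :
    mark X I = Nat.card {x : X // ∀ i ∈ I, i • x = x} := by
  simp only [mark, SetLike.le_def, mem_stabilizer_iff]

lemma mark_congr (e : X ≃ Y) (he : ∀ (g : G) x, e (g • x) = g • e x) :
    mark (G := G) X = mark Y := by
  funext I
  refine congrArg Nat.cast (Nat.card_congr (e.subtypeEquiv fun x => ?_))
  simp only [SetLike.le_def, mem_stabilizer_iff, ← he, e.apply_eq_iff_eq]

lemma mark_conj_smul (g : G) (I : Subgroup G) : mark X (MulAut.conj g • I) = mark X I := by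
  refine congrArg Nat.cast (Nat.card_congr ((toPerm g).subtypeEquiv fun x => ?_)).symm
  rw [toPerm_apply, stabilizer_smul_eq_stabilizer_map_conj]
  exact Subgroup.pointwise_smul_le_pointwise_smul_iff.symm

lemma mark_empty [IsEmpty X] : mark (G := G) X = 0 := by
  funext I
  simp [mark]

lemma mark_punit : mark (G := G) PUnit = 1 := by
  funext I
  simp [mark_eq_card_subtype]

lemma mark_sum [Finite X] [Finite Y] : mark (G := G) (X ⊕ Y) = mark X + mark Y := by
  funext I
  simp only [mark_eq_card_subtype, Pi.add_apply, ← Nat.cast_add, ← Nat.card_sum]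
  exact congrArg Nat.cast (Nat.card_congr (Equiv.subtypeSum.trans (Equiv.sumCongr
    (Equiv.subtypeEquivRight (by simp)) (Equiv.subtypeEquivRight (by simp)))))

lemma mark_prod : mark (G := G) (X × Y) = mark X * mark Y := by
  funext I
  simp only [mark_eq_card_subtype, Pi.mul_apply, ← Nat.cast_mul, ← Nat.card_prod]
  refine congrArg Nat.cast (Nat.card_congr (.trans (Equiv.subtypeEquivRight fun x => ?_)
    Equiv.subtypeProdEquivProd))
  simp [Prod.ext_iff, forall_and]

lemma mark_quotient_ne_zero {P I : Subgroup G} (h : mark (G ⧸ P) I ≠ 0) :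
    ∃ g : G, MulAut.conj g • I ≤ P := by
  obtain ⟨⟨x, hx⟩⟩ := (Nat.card_ne_zero.mp (Nat.cast_ne_zero.mp h)).1
  obtain ⟨g, rfl⟩ := QuotientGroup.mk_surjective x
  exact ⟨g⁻¹, le_stabilizer_mk_iff_conj_smul_le.mp hx⟩

lemma mark_pResidualImage_modEq {p : ℕ} [Fact p.Prime] [Finite X] (I : Subgroup G) [Finite I] :
    mark X (pResidualImage p I) ≡ mark X I [ZMOD p] := by
  have hres : mark X (pResidualImage p I) = Nat.card (fixedPoints (pResidual p I) X) := by
    refine congrArg Nat.cast (Nat.card_congr (Equiv.subtypeEquivRight fun x => ?_))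
    rw [pResidualImage, Subgroup.map_le_iff_le_comap, mem_fixedPoints_iff_le_stabilizer]
    rfl
  have hmark : mark X I = Nat.card (fixedPoints I X) :=
    congrArg Nat.cast (Nat.card_congr (Equiv.subtypeEquivRight fun x =>
      mem_fixedPoints_iff_le_stabilizer.symm))
  rw [hres, hmark, Int.natCast_modEq_iff]
  exact card_fixedPoints_modEq_of_isPGroup_quotient isPGroup_quotient_pResidual

end Mark

/-- The subring of differences of elements of a subsemiring `S`, which is the image in `R` of the
Grothendieck ring of `S`. -/
def differenceSubring {R : Type*} [CommRing R] (S : Subsemiring R) : Subring R where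
  carrier := {x | ∃ a ∈ S, ∃ b ∈ S, x = a - b}
  zero_mem' := ⟨0, zero_mem S, 0, zero_mem S, (sub_zero 0).symm⟩
  one_mem' := ⟨1, one_mem S, 0, zero_mem S, (sub_zero 1).symm⟩
  add_mem' := by
    rintro _ _ ⟨a, ha, b, hb, rfl⟩ ⟨c, hc, d, hd, rfl⟩
    exact ⟨a + c, add_mem ha hc, b + d, add_mem hb hd, by ring⟩
  neg_mem' := by
    rintro _ ⟨a, ha, b, hb, rfl⟩
    exact ⟨b, hb, a, ha, neg_sub a b⟩
  mul_mem' := by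
    rintro _ _ ⟨a, ha, b, hb, rfl⟩ ⟨c, hc, d, hd, rfl⟩
    exact ⟨a * c + b * d, add_mem (mul_mem ha hc) (mul_mem hb hd),
      a * d + b * c, add_mem (mul_mem ha hd) (mul_mem hb hc), by ring⟩

section Burnside

variable (G : Type*) [Group G]

/-- The semiring of mark functions of finite `G`-sets, with disjoint unions as sums and products of
`G`-sets as products. Carriers in `Type` suffice because finite sets are small. -/
def markSubsemiring : Subsemiring (Subgroup G → ℤ) where
  carrier := {f | ∃ (X : Type) (_ : Finite X) (_ : MulAction G X), f = mark X}
  zero_mem' :=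
    letI : MulAction G Empty := .compHom Empty (1 : G →* Equiv.Perm Empty)
    ⟨Empty, inferInstance, inferInstance, mark_empty.symm⟩
  one_mem' := ⟨PUnit, inferInstance, inferInstance, mark_punit.symm⟩
  add_mem' := by
    rintro _ _ ⟨X, _, _, rfl⟩ ⟨Y, _, _, rfl⟩
    exact ⟨X ⊕ Y, inferInstance, inferInstance, mark_sum.symm⟩
  mul_mem' := by
    rintro _ _ ⟨X, _, _, rfl⟩ ⟨Y, _, _, rfl⟩
    exact ⟨X × Y, inferInstance, inferInstance, mark_prod.symm⟩

/-- The image of the Burnside ring of `G` in the ring of integer-valued functions on subgroups: the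
differences of mark functions of finite `G`-sets. -/
def burnsideAlgebra : Subalgebra ℤ (Subgroup G → ℤ) :=
  subalgebraOfSubring (differenceSubring (markSubsemiring G))

variable {G}

lemma mark_mem_burnsideAlgebra (X : Type*) [Finite X] [MulAction G X] :
    mark X ∈ burnsideAlgebra G :=
  have hX : mark (Shrink.{0} X) = mark (G := G) X :=
    mark_congr (equivShrink.{0} X).symm equivShrink_symm_smul
  ⟨mark X, ⟨Shrink.{0} X, inferInstance, inferInstance, hX.symm⟩, 0, zero_mem _, (sub_zero _).symm⟩

lemma exists_eq_mark_sub_mark {f : Subgroup G → ℤ} (hf : f ∈ burnsideAlgebra G) :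
    ∃ (X Y : Type) (_ : Finite X) (_ : Finite Y) (_ : MulAction G X) (_ : MulAction G Y),
      f = mark X - mark Y := by
  obtain ⟨_, ⟨X, _, _, rfl⟩, _, ⟨Y, _, _, rfl⟩, rfl⟩ := hf
  exact ⟨X, Y, inferInstance, inferInstance, inferInstance, inferInstance, rfl⟩

end Burnside

section Sylow

variable (p : ℕ) [Fact p.Prime] {G : Type*} [Group G]

lemma exists_le_relIndex_eq_pow_not_dvd_index (N : Subgroup G) [N.Normal] [Finite (G ⧸ N)] :
    ∃ P, N ≤ P ∧ (∃ k, N.relIndex P = p ^ k) ∧ ¬ p ∣ P.index := by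
  obtain ⟨Q⟩ : Nonempty (Sylow p (G ⧸ N)) := inferInstance
  let π := QuotientGroup.mk' N
  have hπ : Function.Surjective π := QuotientGroup.mk'_surjective N
  refine ⟨Q.comap π, QuotientGroup.le_comap_mk' N Q, ?_, ?_⟩
  · have hN : (⊥ : Subgroup (G ⧸ N)).comap π = N := by simp [π, MonoidHom.comap_bot]
    obtain ⟨k, hk⟩ := IsPGroup.iff_card.mp Q.isPGroup'
    refine ⟨k, ?_⟩
    calc N.relIndex (Q.comap π) = (⊥ : Subgroup (G ⧸ N)).relIndex ((Q.comap π).map π) := by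
          rw [← Subgroup.relIndex_comap, hN]
      _ = Nat.card Q := by
          rw [Subgroup.map_comap_eq_self_of_surjective hπ, Subgroup.relIndex_bot_left]
      _ = p ^ k := hk
  · rw [Subgroup.index_comap_of_surjective _ hπ]
    exact Q.not_dvd_index

lemma exists_le_normalizer_relIndex_eq_pow_not_dvd_relIndex [Finite G] (H : Subgroup G) :
    ∃ P, H ≤ P ∧ P ≤ Subgroup.normalizer (H : Set G) ∧ (∃ k, H.relIndex P = p ^ k) ∧
      ¬ p ∣ P.relIndex (Subgroup.normalizer (H : Set G)) := by
  obtain ⟨P, hHP, hk, hindex⟩ :=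
    exists_le_relIndex_eq_pow_not_dvd_index p (H.subgroupOf (Subgroup.normalizer (H : Set G)))
  refine ⟨P.map (Subgroup.subtype _), ?_, Subgroup.map_subtype_le P, ?_, ?_⟩
  · exact (Subgroup.map_subgroupOf_eq_of_le H.le_normalizer).ge.trans (Subgroup.map_mono hHP)
  · rwa [← Subgroup.relIndex_comap]
  · rwa [Subgroup.relIndex, Subgroup.subgroupOf,
      Subgroup.comap_map_eq_self_of_injective (Subgroup.subtype_injective _)]

lemma mem_normalizer_of_conj_smul_le {H : Subgroup G} [Finite H] {g : G}
    (h : MulAut.conj g • H ≤ H) : g ∈ Subgroup.normalizer (H : Set G) :=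
  Subgroup.mem_normalizer_fintype fun _ hx => h (Subgroup.smul_mem_pointwise_smul _ _ _ hx)

lemma conj_smul_pResidualImage_le_self_iff {P : Subgroup G} [Finite P] {g : G} :
    MulAut.conj g • pResidualImage p P ≤ P ↔
      g ∈ Subgroup.normalizer (pResidualImage p P : Set G) := by
  have : Finite (pResidualImage p P) := Finite.Set.subset (P : Set G) pResidualImage_le
  refine ⟨fun h => mem_normalizer_of_conj_smul_le ?_, fun h => ?_⟩
  · simpa only [pResidualImage_conj_smul, pResidualImage_pResidualImage]
      using pResidualImage_mono (p := p) h
  · rw [mem_normalizer_iff_conj_smul_eq.mp h]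
    exact pResidualImage_le

lemma mark_quotient_pResidualImage [Finite G] (P : Subgroup G) :
    mark (G ⧸ P) (pResidualImage p P) =
      P.relIndex (Subgroup.normalizer (pResidualImage p P : Set G)) := by
  let F : Set (G ⧸ P) := {x | pResidualImage p P ≤ stabilizer G x}
  have hpre : ((↑) : G → G ⧸ P) ⁻¹' F = Subgroup.normalizer (pResidualImage p P : Set G) := by
    ext g
    rw [Set.mem_preimage, Set.mem_ofPred, le_stabilizer_mk_iff_conj_smul_le,
      conj_smul_pResidualImage_le_self_iff, inv_mem_iff, SetLike.mem_coe]
  have hcard := QuotientGroup.card_preimage_mk P F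
  have hindex := Subgroup.relIndex_mul_relIndex ⊥ P _ bot_le
    (le_normalizer_pResidualImage (p := p) (I := P))
  rw [Subgroup.relIndex_bot_left, Subgroup.relIndex_bot_left] at hindex
  rw [hpre, SetLike.coe_sort_coe, ← hindex] at hcard
  exact congrArg Nat.cast (Nat.eq_of_mul_eq_mul_left Nat.card_pos hcard).symm

lemma exists_pResidualImage_eq_not_dvd_mark [Finite G] {H : Subgroup G}
    (hH : pResidualImage p H = H) :
    ∃ P : Subgroup G, pResidualImage p P = H ∧ ¬ (p : ℤ) ∣ mark (G ⧸ P) H := by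
  obtain ⟨P, hHP, hPN, ⟨k, hk⟩, hindex⟩ :=
    exists_le_normalizer_relIndex_eq_pow_not_dvd_relIndex p H
  have hres : pResidualImage p P = H :=
    le_antisymm (pResidualImage_le_of_relIndex_eq_pow hPN hk)
      (hH.ge.trans (pResidualImage_mono hHP))
  refine ⟨P, hres, ?_⟩
  subst hres
  rwa [mark_quotient_pResidualImage, Int.natCast_dvd_natCast]

end Sylow

section Indicator

variable {p : ℕ} {G : Type*} [Group G]

/-- The preorder `I ≲ J` on subgroups: the image of `O^p(I)` is subconjugate in `G` to that of
`O^p(J)`. For finite `G`, two subgroups are equivalent when their `p`-residuals are conjugate. -/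
def PResidualSubconj (p : ℕ) (I J : Subgroup G) : Prop :=
  ∃ g : G, MulAut.conj g • pResidualImage p I ≤ pResidualImage p J

instance PResidualSubconj.isPreorder : IsPreorder (Subgroup G) (PResidualSubconj p) where
  refl I := ⟨1, by rw [map_one, one_smul]⟩
  trans I J K := by
    rintro ⟨g, hg⟩ ⟨h, hh⟩
    refine ⟨h * g, ?_⟩
    rw [map_mul, mul_smul]
    exact (Subgroup.pointwise_smul_le_pointwise_smul_iff.mpr hg).trans hh

lemma card_conj_smul (g : G) (H : Subgroup G) :
    Nat.card (MulAut.conj g • H : Subgroup G) = Nat.card H :=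
  (Nat.card_congr (Subgroup.equivSMul _ H).toEquiv).symm

lemma antisymmRel_pResidualSubconj_iff [Finite G] {I J : Subgroup G} :
    AntisymmRel (PResidualSubconj p) I J ↔
      ∃ g : G, MulAut.conj g • pResidualImage p I = pResidualImage p J := by
  constructor
  · rintro ⟨⟨g, hg⟩, ⟨h, hh⟩⟩
    refine ⟨g, Subgroup.eq_of_le_of_card_ge hg ?_⟩
    rw [card_conj_smul, ← card_conj_smul h]
    exact Subgroup.card_le_of_le hh
  · rintro ⟨g, hg⟩
    refine ⟨⟨g, hg.le⟩, ⟨g⁻¹, ?_⟩⟩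
    rw [← hg, map_inv, inv_smul_smul]

variable (p) [Fact p.Prime] [Finite G]

lemma exists_mem_burnsideAlgebra_not_dvd_of_antisymmRel (J : Subgroup G) :
    ∃ f ∈ burnsideAlgebra G, (∀ I, f I ≠ 0 → PResidualSubconj p I J) ∧
      ∀ I, AntisymmRel (PResidualSubconj p) I J → ¬ (p : ℤ) ∣ f I := by
  obtain ⟨P, hP, hdvd⟩ :=
    exists_pResidualImage_eq_not_dvd_mark p (pResidualImage_pResidualImage (I := J))
  refine ⟨mark (G ⧸ P), mark_mem_burnsideAlgebra _, fun I hI => ?_, fun I hI => ?_⟩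
  · obtain ⟨g, hg⟩ := mark_quotient_ne_zero hI
    refine ⟨g, ?_⟩
    rw [← pResidualImage_conj_smul, ← hP]
    exact pResidualImage_mono hg
  · obtain ⟨g, hg⟩ := antisymmRel_pResidualSubconj_iff.mp hI
    rwa [← (mark_pResidualImage_modEq I).dvd_iff, ← mark_conj_smul g, hg]

theorem exists_indicator_mem_burnsideAlgebra (J : Subgroup G) :
    ∃ n : ℕ, ¬ p ∣ n ∧ {I | AntisymmRel (PResidualSubconj p) I J}.indicator (fun _ => (n : ℤ)) ∈
      burnsideAlgebra G := by
  have : (Ideal.span {(p : ℤ)}).IsPrime := by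
    rw [Ideal.span_singleton_prime (by exact_mod_cast (Fact.out : p.Prime).ne_zero)]
    exact Nat.prime_iff_prime_int.mp Fact.out
  choose f hfB hfr hfp using
    exists_mem_burnsideAlgebra_not_dvd_of_antisymmRel p (G := G)
  obtain ⟨n, hn, hmem⟩ := exists_indicator_antisymmRel_mem (burnsideAlgebra G)
    (Ideal.span {(p : ℤ)}).primeCompl (PResidualSubconj p) hfB (fun I J => hfr J I)
    (fun I J h => mt Ideal.mem_span_singleton.mp (hfp J I h)) J
  refine ⟨n.natAbs, ?_, ?_⟩
  · rwa [← Int.natCast_dvd, ← Ideal.mem_span_singleton]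
  · convert Subalgebra.smul_mem _ hmem n.sign using 1
    funext I
    simp [Set.indicator_apply]

end Indicator

/-- If `H ≤ G` is `p`-perfect (`O^p(H) = H`), then there are a
positive integer `n` coprime to `p` and finite `G`-sets `X`, `Y` such that for
every subgroup `I ≤ G`, `|X^I| − |Y^I|` equals `n` if the image in `G` of
`O^p(I)` is conjugate in `G` to `H`, and `0` otherwise. -/
theorem stmt18 {G : Type*} [Group G] [Finite G] (p : ℕ) (hp : p.Prime)
    (H : Subgroup G) (hH : pResidual p ↥H = ⊤) :
    ∃ (n : ℕ), 0 < n ∧ ¬ p ∣ n ∧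
      ∃ (X Y : Type) (_ : Finite X) (_ : Finite Y)
        (sX : G → X → X) (sY : G → Y → Y),
        (∀ (g g' : G) (x : X), sX (g * g') x = sX g (sX g' x)) ∧
        (∀ x : X, sX 1 x = x) ∧
        (∀ (g g' : G) (y : Y), sY (g * g') y = sY g (sY g' y)) ∧
        (∀ y : Y, sY 1 y = y) ∧
        ∀ I : Subgroup G,
          (Nat.card {x : X // ∀ i ∈ I, sX i x = x} : ℤ)
              - (Nat.card {y : Y // ∀ i ∈ I, sY i y = y} : ℤ)
            = if ∃ g : G, ((pResidual p ↥I).map I.subtype).map (MulAut.conj g).toMonoidHom = H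
              then (n : ℤ) else 0 := by
  have : Fact p.Prime := ⟨hp⟩
  obtain ⟨n, hpn, hmem⟩ := exists_indicator_mem_burnsideAlgebra p H
  obtain ⟨X, Y, hX, hY, _, _, hXY⟩ := exists_eq_mark_sub_mark hmem
  have hn : 0 < n := Nat.pos_of_ne_zero fun h => hpn (h ▸ dvd_zero p)
  refine ⟨n, hn, hpn, X, Y, hX, hY, (· • ·), (· • ·), mul_smul, one_smul G, mul_smul, one_smul G,
    fun I => ?_⟩
  rw [← mark_eq_card_subtype, ← mark_eq_card_subtype, ← Pi.sub_apply, ← hXY, Set.indicator_apply]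
  simp only [Set.mem_ofPred, antisymmRel_pResidualSubconj_iff, pResidualImage_eq_self_iff.mpr hH]
  rfl
end
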